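/- Let K = F_3(x)(y) where y satisfies y^2 = x(x + 1)(x + 2)(x^2 + 1) (the polynomial Y^2 − x(x+1)(x+2)(x^2+1) is irreducible over F_3(x)). Then the ideal class group Cl(O_K), where O_K is the integral closure of F_3[x] in K, has order 8 and exponent two; that is, Cl(O_K) is isomorphic to (Z/2Z) × (Z/2Z) × (Z/2Z). -/

import Mathlib

/-!
Over `F_3` the curve is `y ^ 2 = F` with `F = x ^ 5 - x` squarefree of degree `5`, and the ring of
integers of `K` is `R = F_3[x] ⊕ F_3[x] y` (`model`).

The class group is generated by the ideals `(p, y - b)` with `p` irreducible and `p ∣ b ^ 2 - F`,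
since every other nonzero prime is generated by a polynomial (`Model.cl_mem`). If
`u v = b ^ 2 - F`, then `(u, y - b) (v, y - b) = (y - b)` (`Model.mumford_mul`), which replaces `u`
by a polynomial of smaller degree as long as `deg u ≥ 3` (Cantor reduction,
`Model.cl_mumford_mem`). An enumeration of the pairs with `deg u ≤ 2` leaves only `b = 0` and
`u ∣ F`, so the three classes of `(x, y)`, `(x - 1, y)`, `(x + 1, y)` generate.

Each of these classes has square `1`, as `(u, y) ^ 2 = (u)` for `u ∣ F` (`Model.cl_sq`). They are
independent: up to inversion each nontrivial product of them is the class of some `(u, y)` with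
`u ∣ F` and `1 ≤ deg u ≤ 2`, and such an ideal is not principal because the norm of an element
outside `F_3[x]` has degree at least `5` (`Model.not_principal`). Hence the class group is
`(Z/2) ^ 3`.
-/

open Polynomial


namespace HyperellipticClassGroup

local notation "A" => Polynomial (ZMod 3)

/-! ### The curve and the norm form -/

/-- The right-hand side `x ^ 5 - x` of the curve; over `F_3` it equals
`x (x + 1) (x + 2) (x ^ 2 + 1)`. -/
noncomputable def F : A := X ^ 5 - X

theorem three_A : (3 : A) = 0 := by
  have := CharP.cast_eq_zero (A) 3
  exact_mod_cast this

theorem natDegree_F : F.natDegree = 5 := by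
  unfold F; compute_degree!

theorem F_ne_zero : F ≠ 0 := by
  intro h; have := natDegree_F; simp [h] at this

theorem sq_sub_ne (a c : A) (hc : c ≠ 0) : a ^ 2 - c ^ 2 * F ≠ 0 := by
  intro h
  have := congrArg natDegree (sub_eq_zero.1 h)
  rw [natDegree_pow, natDegree_mul (pow_ne_zero _ hc) F_ne_zero, natDegree_pow, natDegree_F] at this
  omega

/-- The norm of an element `a + c y` with `c ≠ 0` has degree at least `5`: no cancellation occurs,
since `deg a ^ 2` is even and `deg (c ^ 2 F)` is odd. -/
theorem natDegree_norm (a c : A) (hc : c ≠ 0) : 5 ≤ (a ^ 2 - c ^ 2 * F).natDegree := by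
  have h2 : (c ^ 2 * F).natDegree = 2 * c.natDegree + 5 := by
    rw [natDegree_mul (pow_ne_zero _ hc) F_ne_zero, natDegree_pow, natDegree_F]
  have h1 : (a ^ 2).natDegree = 2 * a.natDegree := by rw [natDegree_pow]
  rcases lt_or_ge (a ^ 2).natDegree (c ^ 2 * F).natDegree with h | h
  · rw [natDegree_sub_eq_right_of_natDegree_lt h]; omega
  · rw [natDegree_sub_eq_left_of_natDegree_lt (by omega)]; omega

/-- `R` is a model of the affine coordinate ring `F_3[x, y] / (y ^ 2 - F)`: it is free over
`F_3[x]` on `1, y`, with `y ^ 2 = F`. -/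
structure Model (R : Type*) [CommRing R] [Algebra A R] (y : R) : Prop where
  sq : y ^ 2 = algebraMap A R F
  repr : ∀ r : R, ∃ a c : A, r = algebraMap A R a + algebraMap A R c * y
  indep : ∀ a c : A, algebraMap A R a + algebraMap A R c * y = 0 → a = 0 ∧ c = 0

section
variable {R : Type*} [CommRing R] 

/-! ### Classes of ideals -/

section cl
variable [IsDedekindDomain R]

open Classical in
/-- The class of an ideal in the class group; the zero ideal is sent to `1` by convention. -/
noncomputable def cl (I : Ideal R) : ClassGroup R :=
  if h : I = ⊥ then 1 else ClassGroup.mk0 ⟨I, mem_nonZeroDivisors_of_ne_zero h⟩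

theorem cl_of_ne {I : Ideal R} (h : I ≠ ⊥) :
    cl I = ClassGroup.mk0 ⟨I, mem_nonZeroDivisors_of_ne_zero h⟩ := dif_neg h

theorem cl_mul {I J : Ideal R} (hI : I ≠ ⊥) (hJ : J ≠ ⊥) : cl (I * J) = cl I * cl J := by
  have h : I * J ≠ ⊥ := mul_ne_zero hI hJ
  rw [cl_of_ne hI, cl_of_ne hJ, cl_of_ne h, ← map_mul]
  rfl

theorem cl_eq_one_iff {I : Ideal R} (hI : I ≠ ⊥) : cl I = 1 ↔ Submodule.IsPrincipal I := by
  rw [cl_of_ne hI, ClassGroup.mk0_eq_one_iff]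

theorem cl_span_singleton (r : R) : cl (Ideal.span {r}) = 1 := by
  by_cases h : Ideal.span {r} = ⊥
  · exact dif_pos h
  · exact (cl_eq_one_iff h).2 ⟨r, rfl⟩

theorem cl_mem_of_prime (H : Subgroup (ClassGroup R))
    (h : ∀ P : Ideal R, P ≠ ⊥ → P.IsPrime → cl P ∈ H) (c : ClassGroup R) : c ∈ H := by
  obtain ⟨⟨I, hI⟩, rfl⟩ := ClassGroup.mk0_surjective c
  have h0 : I ≠ ⊥ := nonZeroDivisors.ne_zero hI
  rw [← cl_of_ne h0]
  clear hI h0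
  induction I using UniqueFactorizationMonoid.induction_on_prime with
  | h₁ => 
    have : cl (0 : Ideal R) = 1 := dif_pos rfl
    rw [this]; exact H.one_mem
  | h₂ J hJ =>
    rw [Ideal.isUnit_iff.1 hJ, ← Ideal.span_singleton_one, cl_span_singleton]
    exact H.one_mem
  | h₃ J P hJ hP ih =>
    rw [cl_mul hP.ne_zero hJ]
    exact H.mul_mem (h P hP.ne_zero (Ideal.isPrime_of_prime hP)) ih
end cl

variable [Algebra A R]

/-! ### Mumford ideals -/

/-- The ideal `(u, y - b)` attached to a pair `(u, b)` of polynomials, as in the Mumford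
representation of divisors when `u ∣ b ^ 2 - F`. -/
noncomputable def mumford (y : R) (u b : A) : Ideal R :=
  Ideal.span {algebraMap A R u, y - algebraMap A R b}

theorem three_R : (3 : R) = 0 := by
  have := congrArg (algebraMap A R) three_A
  rwa [map_ofNat, map_zero] at this

theorem mumford_congr (y : R) {u b b' : A} (h : u ∣ b - b') : mumford y u b = mumford y u b' := by
  obtain ⟨t, ht⟩ := h
  have e : algebraMap A R b - algebraMap A R b' = algebraMap A R u * algebraMap A R t := by
    rw [← map_sub, ht, map_mul]
  unfold mumford
  apply le_antisymm <;> rw [Ideal.span_le] <;> rintro z (rfl | rfl)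
  · exact Ideal.subset_span (by simp)
  · exact Ideal.mem_span_pair.2 ⟨-algebraMap A R t, 1, by linear_combination e⟩
  · exact Ideal.subset_span (by simp)
  · exact Ideal.mem_span_pair.2 ⟨algebraMap A R t, 1, by linear_combination -e⟩

theorem mumford_associated (y : R) {u v b : A} (h : Associated u v) :
    mumford y u b = mumford y v b := by
  have e : Ideal.span {algebraMap A R u} = Ideal.span {algebraMap A R v} :=
    le_antisymm
      (Ideal.span_singleton_le_span_singleton.2 (map_dvd _ h.symm.dvd))
      (Ideal.span_singleton_le_span_singleton.2 (map_dvd _ h.dvd))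
  unfold mumford
  rw [Ideal.span_insert, Ideal.span_insert, e]

theorem mumford_one (y : R) (b : A) : mumford y 1 b = ⊤ :=
  (Ideal.eq_top_iff_one _).2 (Ideal.subset_span (by simp))

/-- If `u v = b ^ 2 - F` then `u`, `v`, `b` generate the unit ideal: `F` and, by differentiating
the relation, its derivative lie in `(u, v, b)`, and these two are coprime. -/
theorem F_relation (u v b : A) (h : u * v = b ^ 2 - F) :
    ∃ α β γ : A, α * u + β * v + γ * b = 1 := by
  have h' := congrArg derivative h
  simp only [F, derivative_mul, derivative_sub, derivative_X, derivative_pow] at h'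
  norm_num at h'
  have h5 : (C 5 : A) = 5 := map_ofNat C 5
  have h2 : (C 2 : A) = 2 := map_ofNat C 2
  rw [h5, h2] at h'
  rw [F] at h
  refine ⟨X ^ 3 * v + (1 + X ^ 4) * derivative v, (1 + X ^ 4) * derivative u,
    - X ^ 3 * b - (1 + X ^ 4) * (2 * derivative b), ?_⟩
  linear_combination X ^ 3 * h + (1 + X ^ 4) * h' + (X^4 - 2*(1 + X ^ 4) * X ^ 4) * three_A

namespace Model
variable {y : R} (M : Model R y)
include M

theorem inj : Function.Injective (algebraMap A R) := by
  rw [injective_iff_map_eq_zero]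
  intro a ha
  exact (M.indep a 0 (by simp [ha])).1

theorem mumford_ne_bot {u : A} (hu : u ≠ 0) (b : A) : mumford y u b ≠ ⊥ := by
  intro h
  have : algebraMap A R u ∈ mumford y u b := Ideal.subset_span (by simp)
  rw [h, Ideal.mem_bot, map_eq_zero_iff _ M.inj] at this
  exact hu this

/-- The product is `(y - b)` times the ideal `(u, v, b, y - b)`, which is the whole ring. -/
theorem mumford_mul {u v b : A} (h : u * v = b ^ 2 - F) :
    mumford y u b * mumford y v b = Ideal.span {y - algebraMap A R b} := by
  obtain ⟨α, β, γ, e⟩ := F_relation u v b h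
  have h1 := congrArg (algebraMap A R) h
  have e1 := congrArg (algebraMap A R) e
  simp only [map_mul, map_sub, map_pow, map_add, map_one, ← M.sq] at h1 e1
  unfold mumford
  rw [Ideal.span_pair_mul_span_pair]
  set U := algebraMap A R u
  set V := algebraMap A R v
  set B := algebraMap A R b
  apply le_antisymm
  · rw [Ideal.span_le]
    rintro z (rfl | rfl | rfl | rfl) <;> rw [SetLike.mem_coe, Ideal.mem_span_singleton]
    · exact ⟨-(y + B), by linear_combination h1⟩
    · exact ⟨U, by ring⟩
    · exact ⟨V, by ring⟩
    · exact ⟨y - B, by ring⟩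
  · rw [Ideal.span_le, Set.singleton_subset_iff, SetLike.mem_coe]
    have m1 : U * V ∈ Ideal.span {U * V, U * (y - B), (y - B) * V, (y - B) * (y - B)} :=
      Ideal.subset_span (by simp)
    have m2 : U * (y - B) ∈ Ideal.span {U * V, U * (y - B), (y - B) * V, (y - B) * (y - B)} :=
      Ideal.subset_span (by simp)
    have m3 : (y - B) * V ∈ Ideal.span {U * V, U * (y - B), (y - B) * V, (y - B) * (y - B)} :=
      Ideal.subset_span (by simp)
    have m4 : (y - B) * (y - B) ∈ Ideal.span {U * V, U * (y - B), (y - B) * V, (y - B) * (y - B)} :=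
      Ideal.subset_span (by simp)
    have := Ideal.add_mem _ (Ideal.add_mem _ (Ideal.mul_mem_left _ (algebraMap A R α) m2)
      (Ideal.mul_mem_left _ (algebraMap A R β) m3))
      (Ideal.mul_mem_left _ (algebraMap A R γ) (Ideal.add_mem _ m1 m4))
    convert this using 1
    linear_combination -(y - B) * e1 - algebraMap A R γ * h1 + algebraMap A R γ * B * (y - B) * three_R (R := R)

theorem mumford_zero_mul {u v : A} (h : IsCoprime u v) (hF : u * v ∣ F) :
    mumford y (u * v) 0 = mumford y u 0 * mumford y v 0 := by
  obtain ⟨a, b, e⟩ := h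
  obtain ⟨w, hw⟩ := hF
  have e1 := congrArg (algebraMap A R) e
  have h1 := M.sq
  rw [hw] at h1
  unfold mumford
  simp only [map_zero, sub_zero]
  rw [Ideal.span_pair_mul_span_pair]
  simp only [map_mul, map_add, map_one] at e1 h1 ⊢
  set U := algebraMap A R u
  set V := algebraMap A R v
  apply le_antisymm
  · rw [Ideal.span_le]
    have m2 : U * y ∈ Ideal.span {U * V, U * y, y * V, y * y} := Ideal.subset_span (by simp)
    have m3 : y * V ∈ Ideal.span {U * V, U * y, y * V, y * y} := Ideal.subset_span (by simp)
    rintro z (rfl | hz)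
    · exact Ideal.subset_span (by simp)
    · rw [Set.mem_singleton_iff.1 hz]
      have := Ideal.add_mem _ (Ideal.mul_mem_left _ (algebraMap A R a) m2)
        (Ideal.mul_mem_left _ (algebraMap A R b) m3)
      have e2 : algebraMap A R a * (U * y) + algebraMap A R b * (y * V) = y := by
        linear_combination y * e1
      rwa [e2] at this
  · rw [Ideal.span_le]
    rintro z (rfl | rfl | rfl | rfl)
    · exact Ideal.subset_span (by simp)
    · exact Ideal.mem_span_pair.2 ⟨0, U, by ring⟩
    · exact Ideal.mem_span_pair.2 ⟨0, V, by ring⟩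
    · exact Ideal.mem_span_pair.2 ⟨0, y, by ring⟩


/-- A generator `α` divides `u`, so its norm divides `u ^ 2`, of degree at most `4`; hence `α` is
a polynomial. A polynomial dividing `y` is constant, so the ideal would be the whole ring. -/
theorem not_principal {u : A} (hF : u ∣ F) (h1 : 1 ≤ u.natDegree) (h2 : u.natDegree ≤ 2) :
    ¬ Submodule.IsPrincipal (mumford y u 0) := by
  rintro ⟨α, hα⟩
  have hu0 : u ≠ 0 := by rintro rfl; simp at h1
  have hα' : mumford y u 0 = Ideal.span {α} := hα
  obtain ⟨a, c, rfl⟩ := M.repr α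
  have hu : algebraMap A R u ∈ mumford y u 0 := Ideal.subset_span (by simp)
  have hy : y ∈ mumford y u 0 := Ideal.subset_span (by simp)
  rw [hα', Ideal.mem_span_singleton] at hu hy
  obtain ⟨β, hβ⟩ := hu
  obtain ⟨a', c', rfl⟩ := M.repr β
  have key : u = a * a' + c * c' * F ∧ a * c' + c * a' = 0 := by
    have := M.indep (a * a' + c * c' * F - u) (a * c' + c * a') (by
      simp only [map_add, map_sub, map_mul, ← M.sq]
      linear_combination -hβ)
    exact ⟨(sub_eq_zero.1 this.1).symm, this.2⟩
  have hN : u ^ 2 = (a ^ 2 - c ^ 2 * F) * (a' ^ 2 - c' ^ 2 * F) := by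
    linear_combination (u + a * a' + c * c' * F) * key.1 + F * (a * c' + c * a') * key.2
  have hc : c = 0 := by
    by_contra hc
    have hne : (a ^ 2 - c ^ 2 * F) * (a' ^ 2 - c' ^ 2 * F) ≠ 0 := hN ▸ pow_ne_zero 2 hu0
    have := congrArg natDegree hN
    rw [natDegree_pow, natDegree_mul (left_ne_zero_of_mul hne) (right_ne_zero_of_mul hne)] at this
    have := natDegree_norm a c hc
    omega
  subst hc
  obtain ⟨δ, hδ⟩ := hy
  obtain ⟨s, t, rfl⟩ := M.repr δ
  have k2 := (M.indep (a * s) (a * t - 1) (by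
      simp only [map_sub, map_mul, map_one]
      simp only [map_zero] at hδ
      linear_combination -hδ)).2
  have htop : mumford y u 0 = ⊤ := by
    rw [hα', Ideal.span_singleton_eq_top]
    have : IsUnit a := IsUnit.of_mul_eq_one t (sub_eq_zero.1 k2)
    simpa using this.map (algebraMap A R)
  rw [Ideal.eq_top_iff_one] at htop
  obtain ⟨p, q, hpq⟩ := Ideal.mem_span_pair.1 htop
  obtain ⟨p1, p2, rfl⟩ := M.repr p
  obtain ⟨q1, q2, rfl⟩ := M.repr q
  have k3 := (M.indep (p1 * u + q2 * F - 1) (p2 * u + q1) (by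
      simp only [map_add, map_sub, map_mul, map_one, ← M.sq]
      simp only [map_zero] at hpq
      linear_combination hpq)).1
  have : u ∣ 1 := by
    rw [← sub_eq_zero.1 k3]
    exact dvd_add (dvd_mul_left _ _) (hF.mul_left _)
  have := natDegree_eq_zero_of_isUnit (isUnit_of_dvd_one this)
  omega


theorem cl_mumford_mul [IsDedekindDomain R] {u v b : A} (h : u * v = b ^ 2 - F) :
    cl (mumford y u b) * cl (mumford y v b) = 1 := by
  have h0 : u * v ≠ 0 := by
    rw [h]; simpa using sq_sub_ne b 1 one_ne_zero
  rw [← cl_mul (M.mumford_ne_bot (left_ne_zero_of_mul h0) _)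
    (M.mumford_ne_bot (right_ne_zero_of_mul h0) _), M.mumford_mul h, cl_span_singleton]

theorem cl_mumford_zero_mul [IsDedekindDomain R] {u v : A} (h : IsCoprime u v) (hF : u * v ∣ F) :
    cl (mumford y (u * v) 0) = cl (mumford y u 0) * cl (mumford y v 0) := by
  have h0 : u * v ≠ 0 := ne_zero_of_dvd_ne_zero F_ne_zero hF
  rw [M.mumford_zero_mul h hF, cl_mul (M.mumford_ne_bot (left_ne_zero_of_mul h0) _)
    (M.mumford_ne_bot (right_ne_zero_of_mul h0) _)]

end Model

/-! ### Mumford pairs of degree at most two -/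

/-- The two hypotheses say that `X ^ 2 + p X + q` divides `(r X + s) ^ 2 - F`: they are the
coefficients of the remainder. -/
theorem quadratic_check : ∀ p q r s : ZMod 3,
    -r^2*p+2*r*s -(p^4-3*p^2*q+q^2) + 1 = 0 → -r^2*q+s^2 - p^3*q+2*p*q^2 = 0 →
    (r = 0 ∧ s = 0) ∧ ((p = -1 ∧ q = 0) ∨ (p = 1 ∧ q = 0) ∨ (p = 0 ∧ q = -1) ∨ (p = 0 ∧ q = 1)) := by
  decide

theorem F_factor : F = X * (X - 1) * (X + 1) * (X ^ 2 + 1) := by unfold F; ring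

theorem isCoprime_of_sub {u v : A} (h : (u - v) * (u - v) = 1) : IsCoprime u v :=
  ⟨u - v, -(u - v), by linear_combination h⟩

theorem coprime_X_sub : IsCoprime (X : A) (X - 1) := isCoprime_of_sub (by ring)
theorem coprime_X_add : IsCoprime (X : A) (X + 1) := isCoprime_of_sub (by ring)
theorem coprime_sub_add : IsCoprime (X - 1 : A) (X + 1) :=
  isCoprime_of_sub (by linear_combination three_A)
theorem coprime_triple : IsCoprime (X * (X - 1) : A) (X + 1) :=
  IsCoprime.mul_left coprime_X_add coprime_sub_add

theorem quadratic_cases {u b : A} (hu : u.Monic) (h2 : u.natDegree = 2) (hb : b.natDegree < 2)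
    (h : u ∣ b ^ 2 - F) : b = 0 ∧ (u = X * (X - 1) ∨ u = X * (X + 1) ∨ u = (X - 1) * (X + 1) ∨
      u = X ^ 2 + 1) := by
  obtain ⟨p, q, rfl⟩ : ∃ p q : ZMod 3, u = X ^ 2 + C p * X + C q := by
    refine ⟨u.coeff 1, u.coeff 0, ?_⟩
    conv_lhs => rw [u.as_sum_range_C_mul_X_pow, h2]
    have : u.coeff 2 = 1 := h2 ▸ hu.coeff_natDegree
    simp only [Finset.sum_range_succ, Finset.sum_range_zero, this, map_one]
    ring
  obtain ⟨r, s, rfl⟩ : ∃ r s : ZMod 3, b = C r * X + C s :=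
    exists_eq_X_add_C_of_natDegree_le_one (by omega)
  -- Euclidean division of `b ^ 2 - F` by `X ^ 2 + p X + q`.
  have key : (C r * X + C s) ^ 2 - F = (X ^ 2 + C p * X + C q) *
      (-X^3 + C p * X^2 + (C q - C p ^ 2) * X + (C p ^ 3 - 2 * C p * C q) + C r ^ 2) +
      (C (-r^2*p+2*r*s -(p^4-3*p^2*q+q^2) + 1) * X + C (-r^2*q+s^2 - p^3*q+2*p*q^2)) := by
    have c2 : (C 2 : A) = 2 := map_ofNat C 2
    have c3 : (C 3 : A) = 3 := map_ofNat C 3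
    simp only [map_add, map_sub, map_mul, map_neg, map_pow, map_one, F, c2, c3]
    ring
  rw [key, dvd_add_right (dvd_mul_right _ _)] at h
  have h0 := eq_zero_of_dvd_of_natDegree_lt h (by rw [h2]; exact lt_of_le_of_lt natDegree_linear_le (by norm_num))
  have e1 := congrArg (fun t => coeff t 1) h0
  have e0 := congrArg (fun t => coeff t 0) h0
  simp only [coeff_add, coeff_C_mul, coeff_X_one, coeff_X_zero, coeff_C_zero, coeff_zero, mul_one, mul_zero,
    zero_add, coeff_C_succ, add_zero] at e0 e1
  obtain ⟨⟨rfl, rfl⟩, hpq⟩ := quadratic_check p q r s e1 e0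
  refine ⟨by simp, ?_⟩
  rcases hpq with ⟨rfl, rfl⟩ | ⟨rfl, rfl⟩ | ⟨rfl, rfl⟩ | ⟨rfl, rfl⟩
  · left; simp; ring
  · right; left; simp; ring
  · right; right; left; simp; ring
  · right; right; right; simp

theorem linear_check : ∀ c s : ZMod 3, s ^ 2 - (c ^ 5 - c) = 0 → s = 0 := by decide

theorem linear_cases {u b : A} (hu : u.Monic) (h1 : u.natDegree = 1) (hb : b.natDegree < 1)
    (h : u ∣ b ^ 2 - F) : b = 0 ∧ (u = X ∨ u = X - 1 ∨ u = X + 1) := by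
  obtain ⟨c, rfl⟩ : ∃ c : ZMod 3, u = X - C c := by
    refine ⟨-u.coeff 0, ?_⟩
    rw [map_neg, sub_neg_eq_add]
    exact hu.eq_X_add_C h1
  obtain ⟨s, rfl⟩ : ∃ s : ZMod 3, b = C s := ⟨_, eq_C_of_natDegree_le_zero (by omega)⟩
  rw [dvd_iff_isRoot] at h
  simp only [IsRoot, F, eval_sub, eval_pow, eval_C, eval_X] at h
  obtain rfl := linear_check c s h
  refine ⟨map_zero _, ?_⟩
  have hc : ∀ c : ZMod 3, c = 0 ∨ c = 1 ∨ c = -1 := by decide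
  rcases hc c with rfl | rfl | rfl <;> simp

namespace Model
variable {y : R} (M : Model R y) [IsDedekindDomain R]
include M

/-! ### Generators of the class group -/

/-- Cantor reduction. For `deg u ≥ 3`, after reducing `b` modulo `u`, the cofactor
`(b ^ 2 - F) / u` has smaller degree than `u` and its ideal is inverse to that of `u` in the
class group; for `deg u ≤ 2` the pairs `(u, b)` are known explicitly. -/
theorem cl_mumford_mem (H : Subgroup (ClassGroup R)) (h0 : cl (mumford y X 0) ∈ H)
    (h1 : cl (mumford y (X - 1) 0) ∈ H) (h2 : cl (mumford y (X + 1) 0) ∈ H) :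
    ∀ (n : ℕ) (u b : A), u.natDegree = n → u ≠ 0 → u ∣ b ^ 2 - F → cl (mumford y u b) ∈ H := by
  intro n
  induction n using Nat.strong_induction_on with
  | _ n ih =>
  intro u b hn hu hdvd
  wlog hm : u.Monic generalizing u
  · have ha : Associated u (normalize u) := (normalize_associated u).symm
    rw [mumford_associated y ha]
    refine this _ ?_ (by simpa using hu) (ha.symm.dvd.trans hdvd) (monic_normalize hu)
    rw [← hn]; exact (natDegree_eq_of_degree_eq degree_normalize)
  have hmod : u ∣ b - b %ₘ u := ⟨b /ₘ u, by linear_combination -modByMonic_add_div b u⟩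
  have hdvd' : u ∣ (b %ₘ u) ^ 2 - F := by
    have : (b %ₘ u) ^ 2 - F = b ^ 2 - F - (b - b %ₘ u) * (b + b %ₘ u) := by ring
    rw [this]; exact dvd_sub hdvd (hmod.mul_right _)
  rw [mumford_congr y hmod]
  rcases Nat.eq_zero_or_pos n with h | hpos
  · have : u = 1 := hm.natDegree_eq_zero.1 (hn.trans h)
    rw [this, mumford_one, ← Ideal.span_singleton_one, cl_span_singleton]
    exact H.one_mem
  have hlt : (b %ₘ u).natDegree < u.natDegree := by
    apply natDegree_modByMonic_lt _ hm
    rintro rfl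
    simp at hn; omega
  generalize b %ₘ u = b' at hdvd' hlt
  clear hmod hdvd b
  -- The class of `(x ^ 3 - x, y)` is the product of the three generators.
  have hT : cl (mumford y (X * (X - 1) * (X + 1)) 0) ∈ H := by
    rw [M.cl_mumford_zero_mul coprime_triple ⟨X ^ 2 + 1, F_factor⟩,
      M.cl_mumford_zero_mul coprime_X_sub ⟨(X + 1) * (X ^ 2 + 1), by rw [F_factor]; ring⟩]
    exact H.mul_mem (H.mul_mem h0 h1) h2
  rcases lt_or_ge n 3 with h3 | h3
  · rcases (by omega : n = 1 ∨ n = 2) with h | h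
    · obtain ⟨rfl, rfl | rfl | rfl⟩ := linear_cases hm (hn.trans h) (by omega) hdvd'
      · exact h0
      · exact h1
      · exact h2
    · obtain ⟨rfl, rfl | rfl | rfl | rfl⟩ := quadratic_cases hm (hn.trans h) (by omega) hdvd'
      · rw [M.cl_mumford_zero_mul coprime_X_sub ⟨(X + 1) * (X ^ 2 + 1), by rw [F_factor]; ring⟩]
        exact H.mul_mem h0 h1
      · rw [M.cl_mumford_zero_mul coprime_X_add ⟨(X - 1) * (X ^ 2 + 1), by rw [F_factor]; ring⟩]
        exact H.mul_mem h0 h2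
      · rw [M.cl_mumford_zero_mul coprime_sub_add ⟨X * (X ^ 2 + 1), by rw [F_factor]; ring⟩]
        exact H.mul_mem h1 h2
      · -- `(x ^ 2 + 1, y)` is inverse to `(x ^ 3 - x, y)`.
        have e := M.cl_mumford_mul (u := X ^ 2 + 1) (v := -(X * (X - 1) * (X + 1))) (b := 0)
          (by rw [F_factor]; ring)
        rw [eq_inv_of_mul_eq_one_left e, mumford_associated y (Associated.neg_left (Associated.refl _))]
        exact H.inv_mem hT
  · obtain ⟨v, hv⟩ := hdvd'
    have hne : b' ^ 2 - F ≠ 0 := by simpa using sq_sub_ne b' 1 one_ne_zero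
    have hv0 : v ≠ 0 := by rintro rfl; simp [hv] at hne
    have hdeg : (b' ^ 2 - F).natDegree ≤ max (2 * b'.natDegree) 5 := by
      refine (natDegree_sub_le _ _).trans ?_
      rw [natDegree_pow, natDegree_F]
    rw [hv, natDegree_mul hu hv0] at hdeg
    rw [eq_inv_of_mul_eq_one_left (M.cl_mumford_mul hv.symm)]
    exact H.inv_mem (ih v.natDegree (by omega) v b' rfl hv0 ⟨u, by rw [hv]; ring⟩)

/-- A nonzero prime `P` above `(p)` is either `(p)` itself or `(p, y - b)` for some `b`, so that
every class is controlled by `cl_mumford_mem`. -/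
theorem cl_mem (H : Subgroup (ClassGroup R)) (h0 : cl (mumford y X 0) ∈ H)
    (h1 : cl (mumford y (X - 1) 0) ∈ H) (h2 : cl (mumford y (X + 1) 0) ∈ H) (c : ClassGroup R) :
    c ∈ H := by
  refine cl_mem_of_prime H ?_ c
  intro P hP0 hP
  obtain ⟨p, hp⟩ := IsPrincipalIdealRing.principal (P.comap (algebraMap A R))
  have mem_iff : ∀ a : A, algebraMap A R a ∈ P ↔ p ∣ a := by
    intro a
    rw [← Ideal.mem_comap, hp]
    exact Ideal.mem_span_singleton
  -- A nonzero element of `P` has nonzero norm, which lies in `P ∩ F_3[x]`.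
  have hp0 : p ≠ 0 := by
    rintro rfl
    obtain ⟨r, hr, hr0⟩ := Submodule.exists_mem_ne_zero_of_ne_bot hP0
    obtain ⟨a, c, rfl⟩ := M.repr r
    have e : algebraMap A R (a ^ 2 - c ^ 2 * F) = (algebraMap A R a - algebraMap A R c * y) *
        (algebraMap A R a + algebraMap A R c * y) := by
      simp only [map_sub, map_mul, map_pow, ← M.sq]; ring
    have h := (mem_iff (a ^ 2 - c ^ 2 * F)).1 (e ▸ P.mul_mem_left _ hr)
    rw [zero_dvd_iff] at h
    by_cases hc : c = 0
    · subst hc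
      apply hr0
      have : a = 0 := by simpa using h
      simp [this]
    · exact sq_sub_ne a c hc h
  have hpp : Prime p := by
    rw [← Ideal.span_singleton_prime hp0]
    have : (P.comap (algebraMap A R)) = Ideal.span {p} := hp
    rw [← this]; infer_instance
  by_cases hall : ∀ a c : A, algebraMap A R a + algebraMap A R c * y ∈ P → p ∣ a ∧ p ∣ c
  · have : P = Ideal.span {algebraMap A R p} := by
      apply le_antisymm
      · intro r hr
        obtain ⟨a, c, rfl⟩ := M.repr r
        obtain ⟨ha, hc⟩ := hall a c hr
        rw [Ideal.mem_span_singleton]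
        exact dvd_add (_root_.map_dvd _ ha) ((_root_.map_dvd _ hc).mul_right _)
      · rw [Ideal.span_singleton_le_iff_mem]
        exact (mem_iff p).2 dvd_rfl
    rw [this, cl_span_singleton]
    exact H.one_mem
  · push Not at hall
    obtain ⟨a, c, hac, hnot⟩ := hall
    have hc : ¬ p ∣ c := by
      intro hc
      refine hnot ?_ hc
      rw [← mem_iff]
      have := P.sub_mem hac (P.mul_mem_right y ((mem_iff c).2 hc))
      simpa using this
    obtain ⟨s, t, hst⟩ := (hpp.irreducible.coprime_iff_not_dvd).2 hc
    have hst' := congrArg (algebraMap A R) hst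
    simp only [map_add, map_mul, map_one] at hst'
    have hy : y - algebraMap A R (-(t * a)) ∈ P := by
      have := P.add_mem (P.mul_mem_left (algebraMap A R t) hac)
        (P.mul_mem_left (algebraMap A R s * y) ((mem_iff p).2 dvd_rfl))
      convert this using 1
      simp only [map_neg, map_mul]
      linear_combination -y * hst'
    generalize -(t * a) = b at hy
    have hPeq : P = mumford y p b := by
      apply le_antisymm
      · intro r hr
        obtain ⟨a', c', rfl⟩ := M.repr r
        have h : algebraMap A R (a' + c' * b) ∈ P := by
          have := P.sub_mem hr (P.mul_mem_left (algebraMap A R c') hy)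
          convert this using 1
          simp only [map_add, map_mul]; ring
        obtain ⟨d, hd⟩ := (mem_iff _).1 h
        have hd' := congrArg (algebraMap A R) hd
        simp only [map_add, map_mul] at hd'
        exact Ideal.mem_span_pair.2 ⟨algebraMap A R d, algebraMap A R c', by linear_combination -hd'⟩
      · rw [mumford, Ideal.span_le]
        rintro z (rfl | rfl)
        · exact (mem_iff p).2 dvd_rfl
        · exact hy
    rw [hPeq]
    refine M.cl_mumford_mem H h0 h1 h2 _ p b rfl hp0 ?_
    rw [← mem_iff]
    have := P.mul_mem_left (-(y + algebraMap A R b)) hy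
    convert this using 1
    simp only [map_sub, map_pow, ← M.sq]; ring

/-- The square of `(u, y)` is `(u) (u, y, v) = (u)`, because `u` and `v` are coprime. -/
theorem cl_sq {u v : A} (h : u * v = -F) : cl (mumford y u 0) ^ 2 = 1 := by
  obtain ⟨α, β, γ, e⟩ := F_relation u v 0 (by rw [h]; ring)
  have hu : u ≠ 0 := left_ne_zero_of_mul (h ▸ neg_ne_zero.2 F_ne_zero)
  have h1 := congrArg (algebraMap A R) h
  have e1 := congrArg (algebraMap A R) e
  simp only [map_mul, map_neg, map_add, map_one, ← M.sq, mul_zero, add_zero] at h1 e1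
  have hne := M.mumford_ne_bot hu 0
  rw [pow_two, ← cl_mul hne hne]
  have key : mumford y u 0 * mumford y u 0 = Ideal.span {algebraMap A R u} := by
    unfold mumford
    rw [Ideal.span_pair_mul_span_pair, map_zero, sub_zero]
    set U := algebraMap A R u
    set V := algebraMap A R v
    apply le_antisymm
    · rw [Ideal.span_le]
      rintro z (rfl | rfl | rfl | rfl) <;> rw [SetLike.mem_coe, Ideal.mem_span_singleton]
      · exact ⟨U, rfl⟩
      · exact ⟨y, rfl⟩
      · exact ⟨y, mul_comm _ _⟩
      · exact ⟨-V, by linear_combination h1⟩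
    · rw [Ideal.span_singleton_le_iff_mem]
      have m1 : U * U ∈ Ideal.span {U * U, U * y, y * U, y * y} := Ideal.subset_span (by simp)
      have m4 : y * y ∈ Ideal.span {U * U, U * y, y * U, y * y} := Ideal.subset_span (by simp)
      have := Ideal.sub_mem _ (Ideal.mul_mem_left _ (algebraMap A R α) m1)
        (Ideal.mul_mem_left _ (algebraMap A R β) m4)
      convert this using 1
      linear_combination -U * e1 + algebraMap A R β * h1
  rw [key, cl_span_singleton]

theorem cl_ne_one {u : A} (hF : u ∣ F) (h1 : 1 ≤ u.natDegree) (h2 : u.natDegree ≤ 2) :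
    cl (mumford y u 0) ≠ 1 := by
  rw [Ne, cl_eq_one_iff (M.mumford_ne_bot (ne_zero_of_dvd_ne_zero F_ne_zero hF) 0)]
  exact M.not_principal hF h1 h2

end Model

/-! ### Structure of the class group -/

/-- The homomorphism `(Z/2)³ → G` sending the standard generators to three elements whose squares
are `1`. -/
def homOfSqEqOne {G : Type*} [CommGroup G] (g₀ g₁ g₂ : G) (h₀ : g₀ ^ 2 = 1) (h₁ : g₁ ^ 2 = 1)
    (h₂ : g₂ ^ 2 = 1) : Multiplicative (ZMod 2 × ZMod 2 × ZMod 2) →* G :=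
  MonoidHom.mk' (fun m => g₀ ^ m.toAdd.1.val * g₁ ^ m.toAdd.2.1.val * g₂ ^ m.toAdd.2.2.val) (by
    have key : ∀ g : G, g ^ 2 = 1 → ∀ a b : ZMod 2, g ^ (a + b).val = g ^ a.val * g ^ b.val := by
      intro g hg a b
      rw [ZMod.val_add, ← pow_eq_pow_mod _ hg, pow_add]
    intro a b
    simp only [toAdd_mul, Prod.fst_add, Prod.snd_add, key _ h₀, key _ h₁, key _ h₂]
    rw [mul_mul_mul_comm (g₀ ^ _) (g₀ ^ _), mul_mul_mul_comm (_ * _) (_ * _)])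

theorem Model.nonempty_mulEquiv {y : R} (M : Model R y) [IsDedekindDomain R] :
    Nonempty (ClassGroup R ≃* Multiplicative (ZMod 2 × ZMod 2 × ZMod 2)) := by
  have hX : (X : A).natDegree = 1 := natDegree_X
  have hs : (X - 1 : A).natDegree = 1 := natDegree_X_sub_C 1
  have ha : (X + 1 : A).natDegree = 1 := natDegree_X_add_C 1
  have hXn : (X : A) ≠ 0 := X_ne_zero
  have hsn : (X - 1 : A) ≠ 0 := X_sub_C_ne_zero 1
  have han : (X + 1 : A) ≠ 0 := X_add_C_ne_zero 1
  have hq : (X ^ 2 + 1 : A).natDegree = 2 := by compute_degree!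
  have d01 : (X * (X - 1) : A) ∣ F := ⟨(X + 1) * (X ^ 2 + 1), by rw [F_factor]; ring⟩
  have d02 : (X * (X + 1) : A) ∣ F := ⟨(X - 1) * (X ^ 2 + 1), by rw [F_factor]; ring⟩
  have d12 : ((X - 1) * (X + 1) : A) ∣ F := ⟨X * (X ^ 2 + 1), by rw [F_factor]; ring⟩
  have d012 : (X * (X - 1) * (X + 1) : A) ∣ F := ⟨X ^ 2 + 1, by rw [F_factor]⟩
  have dq : (X ^ 2 + 1 : A) ∣ F := ⟨X * (X - 1) * (X + 1), by rw [F_factor]; ring⟩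
  have n0 := M.cl_ne_one (dvd_of_mul_right_dvd d01) hX.ge (by omega)
  have n1 := M.cl_ne_one (dvd_of_mul_right_dvd d12) hs.ge (by omega)
  have n2 := M.cl_ne_one (dvd_of_mul_left_dvd d12) ha.ge (by omega)
  have n01 := M.cl_ne_one d01 (by rw [natDegree_mul hXn hsn]; omega)
    (by rw [natDegree_mul hXn hsn]; omega)
  have n02 := M.cl_ne_one d02 (by rw [natDegree_mul hXn han]; omega)
    (by rw [natDegree_mul hXn han]; omega)
  have n12 := M.cl_ne_one d12 (by rw [natDegree_mul hsn han]; omega)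
    (by rw [natDegree_mul hsn han]; omega)
  have n012 : cl (mumford y (X * (X - 1) * (X + 1)) 0) ≠ 1 := by
    intro h
    have e := M.cl_mumford_mul (u := X ^ 2 + 1) (v := -(X * (X - 1) * (X + 1))) (b := 0)
      (by rw [F_factor]; ring)
    rw [mumford_associated y (Associated.neg_left (Associated.refl (X * (X - 1) * (X + 1)))), h,
      mul_one] at e
    exact M.cl_ne_one dq (by omega) (by omega) e
  rw [M.cl_mumford_zero_mul coprime_X_sub d01] at n01
  rw [M.cl_mumford_zero_mul coprime_X_add d02] at n02
  rw [M.cl_mumford_zero_mul coprime_sub_add d12] at n12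
  rw [M.cl_mumford_zero_mul coprime_triple d012, M.cl_mumford_zero_mul coprime_X_sub d01] at n012
  have s0 := M.cl_sq (u := X) (v := -((X - 1) * (X + 1) * (X ^ 2 + 1))) (by rw [F_factor]; ring)
  have s1 := M.cl_sq (u := X - 1) (v := -(X * (X + 1) * (X ^ 2 + 1))) (by rw [F_factor]; ring)
  have s2 := M.cl_sq (u := X + 1) (v := -(X * (X - 1) * (X ^ 2 + 1))) (by rw [F_factor]; ring)
  set φ := homOfSqEqOne _ _ _ s0 s1 s2 with hφ
  have hφ' : ∀ m, φ m = cl (mumford y X 0) ^ m.toAdd.1.val * cl (mumford y (X - 1) 0) ^ m.toAdd.2.1.val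
    * cl (mumford y (X + 1) 0) ^ m.toAdd.2.2.val := fun m => rfl
  have hinj : Function.Injective φ := by
    rw [injective_iff_map_eq_one]
    intro m
    obtain ⟨⟨a, b, c⟩, rfl⟩ := Multiplicative.ofAdd.surjective m
    rw [hφ']
    have hz : ∀ c : ZMod 2, c = 0 ∨ c = 1 := by decide
    rcases hz a with rfl | rfl <;> rcases hz b with rfl | rfl <;> rcases hz c with rfl | rfl <;>
      simp [ZMod.val_one, n0, n1, n2, n01, n02, n12, n012]
  have hsurj : Function.Surjective φ := by
    intro c
    refine M.cl_mem φ.range ⟨Multiplicative.ofAdd (1, 0, 0), ?_⟩ ⟨Multiplicative.ofAdd (0, 1, 0), ?_⟩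
      ⟨Multiplicative.ofAdd (0, 0, 1), ?_⟩ c <;> rw [hφ'] <;> simp [ZMod.val_one]
  exact ⟨(MulEquiv.ofBijective φ ⟨hinj, hsurj⟩).symm⟩

end

/-! ### The ring of integers of `K` -/

section ringOfIntegers

local notation "L" => RatFunc (ZMod 3)

theorem F_separable : F.Separable := by
  refine ⟨-X ^ 3, -(1 + X ^ 4), ?_⟩
  have h5 : (C 5 : A) = 5 := map_ofNat C 5
  simp only [F, derivative_sub, derivative_X, derivative_pow]
  norm_num
  rw [h5]
  linear_combination (-2 * X ^ 8 - X ^ 4) * three_A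

theorem two_L : (2 : L) ≠ 0 := by
  intro h
  have h3 : (3 : L) = 0 := by
    have := congrArg (algebraMap A L) three_A
    rwa [map_ofNat, map_zero] at this
  exact one_ne_zero (α := L) (by linear_combination h3 - h)

theorem ratFunc_F : (RatFunc.X * (RatFunc.X + 1) * (RatFunc.X + 2) * (RatFunc.X ^ 2 + 1) : L) =
    algebraMap A L F := by
  have h3 : (3 : L) = 0 := by
    have := congrArg (algebraMap A L) three_A
    rwa [map_ofNat, map_zero] at this
  simp only [F, map_sub, map_pow, RatFunc.algebraMap_X]
  linear_combination (RatFunc.X ^ 4 + RatFunc.X ^ 3 + RatFunc.X ^ 2 + RatFunc.X) * h3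

variable (f : Polynomial L) (hf : f = X ^ 2 - C (algebraMap A L F)) [Fact (Irreducible f)]
include hf

omit [Fact (Irreducible f)] in
theorem f_monic : f.Monic := by rw [hf]; exact monic_X_pow_sub_C _ two_ne_zero
omit [Fact (Irreducible f)] in
theorem f_natDegree : f.natDegree = 2 := by rw [hf]; exact natDegree_X_pow_sub_C

theorem root_sq : AdjoinRoot.root f ^ 2 = algebraMap A (AdjoinRoot f) F := by
  have h := AdjoinRoot.eval₂_root f
  conv at h => lhs; arg 3; rw [hf]
  simp only [eval₂_sub, eval₂_pow, eval₂_X, eval₂_C, sub_eq_zero] at h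
  rw [h, IsScalarTower.algebraMap_apply A L (AdjoinRoot f)]
  rfl

theorem exists_repr (r : AdjoinRoot f) : ∃ s t : L, r = algebraMap L _ s +
    algebraMap L _ t * AdjoinRoot.root f := by
  obtain ⟨p, rfl⟩ := AdjoinRoot.mk_surjective r
  have hm := f_monic f hf
  have hlt : (p %ₘ f).natDegree < f.natDegree :=
    natDegree_modByMonic_lt _ hm (by rintro rfl; simpa using f_natDegree 1 hf)
  rw [f_natDegree f hf] at hlt
  obtain ⟨t, s, h⟩ := exists_eq_X_add_C_of_natDegree_le_one (p := p %ₘ f) (by omega)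
  refine ⟨s, t, ?_⟩
  have : AdjoinRoot.mk f p = AdjoinRoot.mk f (p %ₘ f) := by
    rw [AdjoinRoot.mk_eq_mk]
    exact ⟨p /ₘ f, by linear_combination -modByMonic_add_div p f⟩
  rw [this, h, map_add, map_mul, AdjoinRoot.mk_C, AdjoinRoot.mk_C, AdjoinRoot.mk_X, add_comm]
  rfl

theorem repr_unique (s t : L) (h : algebraMap L (AdjoinRoot f) s +
    algebraMap L _ t * AdjoinRoot.root f = 0) : s = 0 ∧ t = 0 := by
  have h1 : AdjoinRoot.mk f (C t * X + C s) = 0 := by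
    rw [map_add, map_mul, AdjoinRoot.mk_C, AdjoinRoot.mk_C, AdjoinRoot.mk_X, add_comm]
    exact h
  rw [AdjoinRoot.mk_eq_zero] at h1
  have h0 := eq_zero_of_dvd_of_natDegree_lt h1
    (by rw [f_natDegree f hf]; exact lt_of_le_of_lt natDegree_linear_le (by norm_num))
  exact ⟨by simpa using congrArg (fun p => coeff p 0) h0, by simpa using congrArg (fun p => coeff p 1) h0⟩

theorem functionField : FunctionField (ZMod 3) (AdjoinRoot f) :=
  (AdjoinRoot.powerBasis (f_monic f hf).ne_zero).finite

theorem isSeparable : Algebra.IsSeparable L (AdjoinRoot f) := by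
  have hsep : f.Separable := by
    rw [hf]
    refine separable_X_pow_sub_C _ (by exact_mod_cast two_L) ?_
    rw [Ne, map_eq_zero_iff _ (IsFractionRing.injective A L)]
    exact F_ne_zero
  have hroot : AdjoinRoot.root f ∈ separableClosure L (AdjoinRoot f) := by
    rw [mem_separableClosure_iff]
    refine hsep.of_dvd (minpoly.dvd _ _ ?_)
    rw [AdjoinRoot.aeval_eq, AdjoinRoot.mk_self]
  refine ⟨fun r => ?_⟩
  obtain ⟨s, t, rfl⟩ := exists_repr f hf r
  exact mem_separableClosure_iff.1 (add_mem (algebraMap_mem _ s) (mul_mem (algebraMap_mem _ t) hroot))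

/-- The nontrivial automorphism `y ↦ -y` of `K` over `F_3(x)`. -/
noncomputable def conj : AdjoinRoot f →ₐ[L] AdjoinRoot f :=
  AdjoinRoot.liftAlgHom f (Algebra.ofId L _) (-AdjoinRoot.root f) (by
    conv_lhs => arg 3; rw [hf]
    simp only [eval₂_sub, eval₂_pow, eval₂_X, eval₂_C, sub_eq_zero, neg_sq]
    rw [root_sq f hf, IsScalarTower.algebraMap_apply A L (AdjoinRoot f)]
    rfl)

theorem conj_root : conj f hf (AdjoinRoot.root f) = -AdjoinRoot.root f := by
  simp [conj]

omit hf in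
theorem exists_of_isIntegral {s : L} (h : IsIntegral A (algebraMap L (AdjoinRoot f) s)) :
    ∃ a : A, algebraMap A L a = s :=
  IsIntegrallyClosed.isIntegral_iff.1
    ((isIntegral_algebraMap_iff (algebraMap L (AdjoinRoot f)).injective).1 h)

theorem isIntegral_root : IsIntegral A (AdjoinRoot.root f) := by
  refine IsIntegral.of_pow (n := 2) two_pos ?_
  rw [root_sq f hf]
  exact isIntegral_algebraMap

/-- If `s + t y` is integral, so is its trace `2 s = -s`, hence also `t y`, `t y * y = t F` and
`(t y) ^ 2 = t ^ 2 F`. With `h = t F` and `t ^ 2 F` polynomials, `F` divides `h ^ 2`, hence `h`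
because `F` is squarefree, and `t` is a polynomial. -/
theorem exists_repr_of_isIntegral {r : AdjoinRoot f} (hr : IsIntegral A r) :
    ∃ a c : A, r = algebraMap A _ a + algebraMap A _ c * AdjoinRoot.root f := by
  obtain ⟨s, t, rfl⟩ := exists_repr f hf r
  set Y := AdjoinRoot.root f with hY
  have hYi : IsIntegral A Y := isIntegral_root f hf
  have hYs : Y ^ 2 = algebraMap L (AdjoinRoot f) (algebraMap A L F) := by
    rw [root_sq f hf, IsScalarTower.algebraMap_apply A L (AdjoinRoot f)]
  have htr : IsIntegral A (algebraMap L (AdjoinRoot f) (-s)) := by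
    -- In characteristic `3` the trace of `s + t y` is `2 s = -s`.
    have h3 : (3 : AdjoinRoot f) = 0 := three_R
    have h := hr.add (hr.map ((conj f hf).restrictScalars A))
    have e : algebraMap L (AdjoinRoot f) (-s) = (algebraMap L _ s + algebraMap L _ t * Y) +
        conj f hf (algebraMap L _ s + algebraMap L _ t * Y) := by
      simp only [map_add, map_mul, AlgHom.commutes]
      rw [hY, conj_root f hf, map_neg]
      linear_combination -algebraMap L (AdjoinRoot f) s * h3
    rw [e]
    exact h
  obtain ⟨a', ha'⟩ := exists_of_isIntegral f htr
  have hs : algebraMap A L (-a') = s := by rw [map_neg, ha', neg_neg]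
  have htY : IsIntegral A (algebraMap L (AdjoinRoot f) t * Y) := by
    have h := hr.add htr
    rw [map_neg, add_comm, neg_add_cancel_left] at h
    exact h
  obtain ⟨h, hh⟩ : ∃ h : A, algebraMap A L h = t * algebraMap A L F := by
    refine exists_of_isIntegral f ?_
    have e : algebraMap L (AdjoinRoot f) (t * algebraMap A L F) = algebraMap L _ t * Y * Y := by
      rw [map_mul, ← hYs]; ring
    rw [e]
    exact htY.mul hYi
  obtain ⟨g, hg⟩ : ∃ g : A, algebraMap A L g = t ^ 2 * algebraMap A L F := by
    refine exists_of_isIntegral f ?_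
    have e : algebraMap L (AdjoinRoot f) (t ^ 2 * algebraMap A L F) =
        (algebraMap L _ t * Y) ^ 2 := by
      rw [map_mul, ← hYs, map_pow]; ring
    rw [e]
    exact htY.pow 2
  have hdvd : F ∣ h ^ 2 := by
    refine ⟨g, IsFractionRing.injective A L ?_⟩
    rw [map_pow, map_mul, hg, hh]; ring
  obtain ⟨k, rfl⟩ := F_separable.squarefree.isRadical 2 h hdvd
  have hF0 : algebraMap A L F ≠ 0 := by
    rw [Ne, map_eq_zero_iff _ (IsFractionRing.injective A L)]
    exact F_ne_zero
  have ht : algebraMap A L k = t := by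
    rw [map_mul, mul_comm] at hh
    exact mul_right_cancel₀ hF0 hh
  refine ⟨-a', k, ?_⟩
  rw [IsScalarTower.algebraMap_apply A L (AdjoinRoot f),
    IsScalarTower.algebraMap_apply A L (AdjoinRoot f), hs, ht]

/-- The ring of integers of `K` is `F_3[x] ⊕ F_3[x] y`. -/
theorem model : Model (FunctionField.ringOfIntegers (ZMod 3) (AdjoinRoot f))
    ⟨AdjoinRoot.root f, isIntegral_root f hf⟩ where
  sq := Subtype.ext (root_sq f hf)
  repr r := by
    obtain ⟨a, c, h⟩ := exists_repr_of_isIntegral f hf r.2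
    exact ⟨a, c, Subtype.ext h⟩
  indep a c h := by
    have h' := congrArg Subtype.val h
    have := repr_unique f hf (algebraMap A L a) (algebraMap A L c) (by
      rw [← IsScalarTower.algebraMap_apply A L (AdjoinRoot f),
        ← IsScalarTower.algebraMap_apply A L (AdjoinRoot f)]
      exact h')
    rwa [map_eq_zero_iff _ (IsFractionRing.injective A L),
      map_eq_zero_iff _ (IsFractionRing.injective A L)] at this

end ringOfIntegers
end HyperellipticClassGroup

theorem class_group_statement_16
    (f : Polynomial (RatFunc (ZMod 3)))
    (hf : f = X ^ 2 - C (RatFunc.X * (RatFunc.X + 1) * (RatFunc.X + 2) * (RatFunc.X ^ 2 + 1)))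
    [Fact (Irreducible f)] :
    Nat.card (ClassGroup (FunctionField.ringOfIntegers (ZMod 3) (AdjoinRoot f))) = 8 ∧
      (∀ c : ClassGroup (FunctionField.ringOfIntegers (ZMod 3) (AdjoinRoot f)), c ^ 2 = 1) ∧
      Nonempty (ClassGroup (FunctionField.ringOfIntegers (ZMod 3) (AdjoinRoot f)) ≃* Multiplicative (ZMod 2 × ZMod 2 × ZMod 2)) := by
  rw [HyperellipticClassGroup.ratFunc_F] at hf
  have := HyperellipticClassGroup.functionField f hf
  have := HyperellipticClassGroup.isSeparable f hf
  have : IsDedekindDomain (FunctionField.ringOfIntegers (ZMod 3) (AdjoinRoot f)) := inferInstance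
  obtain ⟨e⟩ := (HyperellipticClassGroup.model f hf).nonempty_mulEquiv
  refine ⟨?_, fun c => e.injective ?_, ⟨e⟩⟩
  · rw [Nat.card_congr e.toEquiv, Nat.card_eq_fintype_card]
    rfl
  · have h : ∀ m : Multiplicative (ZMod 2 × ZMod 2 × ZMod 2), m ^ 2 = 1 := by decide
    rw [map_pow, h, map_one]
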